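/- For every natural number n and every ρ ∈ (0, 1] there exists a constant C > 0, depending only on n and ρ, with the following property: for every x0 ∈ ℝ², every h > 0, every measurable set K ⊆ ℝ² with closedBall(x0, ρ·h) ⊆ K ⊆ closedBall(x0, h), and every polynomial function p : ℝ² → ℝ of total degree at most n, one has sup_{x ∈ K} |p(x)| ≤ C · h^{−1} · ( ∫_K p(x)² dx )^{1/2}. -/

import Mathlib

open MeasureTheory Metric

/-!
On the reference configuration (unit ball, inner ball of radius `ρ`) the sup norm over the unit ball
is controlled by the `L^p` norm over the inner ball: polynomials of degree at most `n` form a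
finite-dimensional space, on which the `L^p` norm over a set with nonempty interior is definite.
The affine map `x ↦ x0 + h • x` carries this inequality to an arbitrary element without raising the
degree; the Jacobian `h ^ d` yields the factor `h ^ (-d / p)`.
-/

section FiniteDimensional

variable {𝕜 V E F : Type*} [NontriviallyNormedField 𝕜] [CompleteSpace 𝕜]
  [AddCommGroup V] [Module 𝕜 V] [FiniteDimensional 𝕜 V]
  [SeminormedAddCommGroup E] [NormedSpace 𝕜 E] [NormedAddCommGroup F] [NormedSpace 𝕜 F]

theorem exists_norm_le_mul_norm_of_injective (S : V →ₗ[𝕜] E) {T : V →ₗ[𝕜] F}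
    (hT : Function.Injective T) : ∃ C > 0, ∀ v, ‖S v‖ ≤ C * ‖T v‖ := by
  let e := LinearEquiv.ofInjective T hT
  obtain ⟨C, hC, hbound⟩ := (S ∘ₗ e.symm.toLinearMap).toContinuousLinearMap.bound
  exact ⟨C, hC, fun v ↦ by simpa [e] using hbound (e v)⟩

end FiniteDimensional

section LpNorm

open scoped ENNReal

variable {α β F : Type*} [MeasurableSpace α] [MeasurableSpace β] [NormedAddCommGroup F]
  {p : ℝ≥0∞} {μ ν : Measure α}

theorem memLp_restrict_of_isBounded {X : Type*} [PseudoMetricSpace X] [ProperSpace X]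
    [MeasurableSpace X] [OpensMeasurableSpace X] {μ : Measure X} [IsFiniteMeasureOnCompacts μ]
    {s : Set X} (hs : Bornology.IsBounded s) {f : X → F} (hf : Continuous f) :
    MemLp f p (μ.restrict s) := by
  have hcpt : IsCompact (closure s) := hs.isCompact_closure
  have : IsFiniteMeasure (μ.restrict (closure s)) := ⟨by simpa using hcpt.measure_lt_top⟩
  obtain ⟨C, hC⟩ := hcpt.exists_bound_of_continuousOn hf.continuousOn
  have hclosure : MemLp f p (μ.restrict (closure s)) :=
    .of_bound hf.aestronglyMeasurable C
      (ae_restrict_of_forall_mem isClosed_closure.measurableSet hC)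
  exact hclosure.mono_measure (Measure.restrict_mono_set μ subset_closure)

theorem lpNorm_mono_measure {f : α → F} (hf : MemLp f p ν) (hμν : μ ≤ ν) :
    lpNorm f p μ ≤ lpNorm f p ν := by
  rw [← toReal_eLpNorm hf.aestronglyMeasurable,
    ← toReal_eLpNorm (hf.mono_measure hμν).aestronglyMeasurable]
  exact ENNReal.toReal_mono hf.eLpNorm_ne_top (eLpNorm_mono_measure f hμν)

theorem lpNorm_map_of_measurableEmbedding {g : α → β} (hg : MeasurableEmbedding g) (f : β → F) :
    lpNorm f p (μ.map g) = lpNorm (f ∘ g) p μ := by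
  classical simp only [lpNorm, hg.aestronglyMeasurable_map_iff, hg.eLpNorm_map_measure]

theorem lpNorm_two_eq_sqrt_integral_sq {f : α → ℝ} (hf : AEStronglyMeasurable f μ) :
    lpNorm f 2 μ = √(∫ x, f x ^ 2 ∂μ) := by
  simp [lpNorm_eq_integral_norm_rpow_toReal two_ne_zero ENNReal.ofNat_ne_top hf,
    Real.sqrt_eq_rpow]

end LpNorm

section Dilation

open scoped ENNReal

variable {E F : Type*} [NormedAddCommGroup E] [NormedSpace ℝ E] [NormedAddCommGroup F]

theorem preimage_add_smul_closedBall (c : E) {r : ℝ} (hr : 0 < r) (ρ : ℝ) :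
    (fun x ↦ c + r • x) ⁻¹' closedBall c (ρ * r) = closedBall 0 ρ := by
  ext x
  simp [norm_smul, abs_of_pos hr, mul_comm ρ, mul_le_mul_iff_right₀ hr]

variable [MeasurableSpace E] [BorelSpace E]

theorem measurableEmbedding_add_smul (c : E) {r : ℝ} (hr : r ≠ 0) :
    MeasurableEmbedding fun x ↦ c + r • x :=
  (measurableEmbedding_addLeft c).comp (measurableEmbedding_const_smul₀ hr)

variable [FiniteDimensional ℝ E] (μ : Measure E) [μ.IsAddHaarMeasure]

theorem map_add_smul_addHaar (c : E) {r : ℝ} (hr : r ≠ 0) :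
    μ.map (fun x ↦ c + r • x) = ENNReal.ofReal |(r ^ Module.finrank ℝ E)⁻¹| • μ := by
  have hcomp : (fun x : E ↦ c + r • x) = (c + ·) ∘ (r • ·) := rfl
  rw [hcomp, ← Measure.map_map (measurable_const_add c) (measurable_const_smul r),
    Measure.map_addHaar_smul μ hr, Measure.map_smul, map_add_left_eq_self]

theorem lpNorm_comp_add_smul (f : E → F) (p : ℝ≥0∞) (c : E) {r : ℝ} (hr : 0 < r) (s : Set E) :
    lpNorm (fun x ↦ f (c + r • x)) p (μ.restrict ((fun x ↦ c + r • x) ⁻¹' s)) =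
      r ^ (-(Module.finrank ℝ E / p.toReal)) * lpNorm f p (μ.restrict s) := by
  have hjac : 0 < (r ^ Module.finrank ℝ E)⁻¹ := by positivity
  have hemb := measurableEmbedding_add_smul c hr.ne'
  calc lpNorm (fun x ↦ f (c + r • x)) p (μ.restrict ((fun x ↦ c + r • x) ⁻¹' s))
    _ = lpNorm f p ((r ^ Module.finrank ℝ E)⁻¹.toNNReal • μ.restrict s) := by
      rw [← Function.comp_def f, ← lpNorm_map_of_measurableEmbedding hemb, ← hemb.restrict_map,
        map_add_smul_addHaar μ c hr.ne', abs_of_pos hjac, Measure.restrict_smul]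
      rfl
    _ = ((r ^ Module.finrank ℝ E)⁻¹) ^ p.toReal⁻¹ * lpNorm f p (μ.restrict s) := by
      rw [lpNorm_smul_measure_of_ne_zero (Real.toNNReal_pos.2 hjac).ne', NNReal.smul_def,
        NNReal.coe_rpow, Real.coe_toNNReal _ hjac.le, smul_eq_mul]
    _ = r ^ (-(Module.finrank ℝ E / p.toReal)) * lpNorm f p (μ.restrict s) := by
      rw [← Real.rpow_natCast, ← Real.rpow_neg hr.le, ← Real.rpow_mul hr.le, neg_mul,
        div_eq_mul_inv]

end Dilation

section ContinuousMap

open scoped ENNReal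

variable {X 𝕜 F : Type*} [TopologicalSpace X] [MeasurableSpace X]
  [NontriviallyNormedField 𝕜] [NormedAddCommGroup F] [NormedSpace 𝕜 F]
  {p : ℝ≥0∞} {μ : Measure X}

/-- The linear map sending the elements of a space `V` of `p`-integrable continuous functions to
their classes in `L^p`. It plays the role of `ContinuousMap.toLp` when the ambient space is not
compact, so that integrability has to be assumed. -/
noncomputable def submoduleToLp (V : Submodule 𝕜 C(X, F)) (hV : ∀ f ∈ V, MemLp f p μ) :
    V →ₗ[𝕜] Lp F p μ where
  toFun f := (hV f f.2).toLp f
  map_add' _ _ := rfl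
  map_smul' _ _ := rfl

theorem norm_submoduleToLp {V : Submodule 𝕜 C(X, F)} (hV : ∀ f ∈ V, MemLp f p μ) (f : V) :
    ‖submoduleToLp V hV f‖ = lpNorm f.1 p μ := by
  rw [← toReal_eLpNorm (hV f f.2).aestronglyMeasurable]
  exact Lp.norm_toLp _ (hV f f.2)

theorem submoduleToLp_injective {V : Submodule 𝕜 C(X, F)} (hV : ∀ f ∈ V, MemLp f p μ)
    (hdef : ∀ f ∈ V, f =ᵐ[μ] 0 → f = 0) : Function.Injective (submoduleToLp V hV) := by
  refine (injective_iff_map_eq_zero _).2 fun f hf ↦ Subtype.ext (hdef f f.2 ?_)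
  exact (MemLp.toLp_eq_toLp_iff (hV f f.2) MemLp.zero).1 hf

theorem exists_norm_apply_le_mul_lpNorm [CompleteSpace 𝕜] [Fact (1 ≤ p)]
    (V : Submodule 𝕜 C(X, F)) [FiniteDimensional 𝕜 V] (hV : ∀ f ∈ V, MemLp f p μ)
    (hdef : ∀ f ∈ V, f =ᵐ[μ] 0 → f = 0) {B : Set X} (hB : IsCompact B) :
    ∃ C > 0, ∀ f ∈ V, ∀ x ∈ B, ‖f x‖ ≤ C * lpNorm f p μ := by
  have : CompactSpace B := isCompact_iff_compactSpace.1 hB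
  let S : V →ₗ[𝕜] C(B, F) :=
    { toFun f := f.1.restrict B
      map_add' _ _ := rfl
      map_smul' _ _ := rfl }
  obtain ⟨C, hC, hbound⟩ := exists_norm_le_mul_norm_of_injective S (submoduleToLp_injective hV hdef)
  refine ⟨C, hC, fun f hf x hx ↦ ?_⟩
  calc ‖f x‖ ≤ ‖S ⟨f, hf⟩‖ := (S ⟨f, hf⟩).norm_coe_le_norm ⟨x, hx⟩
    _ ≤ C * lpNorm f p μ := by simpa only [norm_submoduleToLp] using hbound ⟨f, hf⟩

end ContinuousMap

section Polynomial

open scoped ENNReal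

theorem totalDegree_aeval_le {σ τ R : Type*} [CommSemiring R] {f : σ → MvPolynomial τ R} {d : ℕ}
    (hf : ∀ i, (f i).totalDegree ≤ d) (q : MvPolynomial σ R) :
    (MvPolynomial.aeval f q).totalDegree ≤ q.totalDegree * d := by
  rw [MvPolynomial.aeval_def, MvPolynomial.eval₂_eq]
  refine MvPolynomial.totalDegree_finsetSum_le fun m hm ↦ ?_
  calc (algebraMap R (MvPolynomial τ R) (q.coeff m) * ∏ i ∈ m.support, f i ^ m i).totalDegree
    _ ≤ (∏ i ∈ m.support, f i ^ m i).totalDegree :=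
      (MvPolynomial.totalDegree_mul _ _).trans_eq <| by
        rw [MvPolynomial.algebraMap_eq, MvPolynomial.totalDegree_C, zero_add]
    _ ≤ ∑ i ∈ m.support, (f i ^ m i).totalDegree := MvPolynomial.totalDegree_finsetProd _ _
    _ ≤ ∑ i ∈ m.support, m i * d := Finset.sum_le_sum fun i _ ↦
      (MvPolynomial.totalDegree_pow _ _).trans (Nat.mul_le_mul_left _ (hf i))
    _ = (∑ i ∈ m.support, m i) * d := (Finset.sum_mul _ _ _).symm
    _ ≤ q.totalDegree * d := Nat.mul_le_mul_right d (MvPolynomial.le_totalDegree hm)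

variable {ι : Type*}

theorem exists_totalDegree_le_eval_add_smul {R : Type*} [CommSemiring R] (c : ι → R) (r : R)
    (q : MvPolynomial ι R) :
    ∃ q' : MvPolynomial ι R, q'.totalDegree ≤ q.totalDegree ∧
      ∀ x, MvPolynomial.eval x q' = MvPolynomial.eval (c + r • x) q := by
  let f : ι → MvPolynomial ι R := fun i ↦
    MvPolynomial.C (c i) + MvPolynomial.C r * MvPolynomial.X i
  have hf (i : ι) : (f i).totalDegree ≤ 1 := by
    refine (MvPolynomial.totalDegree_add _ _).trans (max_le (by simp) ?_)
    rw [MvPolynomial.C_mul_X_eq_monomial]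
    exact (MvPolynomial.totalDegree_monomial_le _ _).trans (by simp)
  refine ⟨MvPolynomial.aeval f q, by simpa using totalDegree_aeval_le hf q, fun x ↦ ?_⟩
  have hfx : (fun i ↦ MvPolynomial.aeval x (f i)) = c + r • x := by ext i; simp [f]
  rw [← MvPolynomial.aeval_eq_eval, MvPolynomial.comp_aeval_apply, hfx,
    ← MvPolynomial.aeval_eq_eval]

/-- The polynomial function on Euclidean space defined by a multivariate polynomial, bundled as a
linear map into the continuous functions, so that the polynomials of bounded degree become a
finite-dimensional subspace of them. -/
noncomputable def polynomialFunction : MvPolynomial ι ℝ →ₗ[ℝ] C(EuclideanSpace ℝ ι, ℝ) where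
  toFun q := ⟨fun x ↦ MvPolynomial.eval (fun i ↦ x i) q,
    (MvPolynomial.continuous_eval q).comp (by fun_prop)⟩
  map_add' _ _ := by ext; simp
  map_smul' _ _ := by ext; simp

theorem polynomialFunction_apply (q : MvPolynomial ι ℝ) (x : EuclideanSpace ℝ ι) :
    polynomialFunction q x = MvPolynomial.eval (fun i ↦ x i) q := rfl

variable [Fintype ι]

theorem analyticOnNhd_polynomialFunction (q : MvPolynomial ι ℝ) :
    AnalyticOnNhd ℝ (polynomialFunction q) Set.univ :=
  AnalyticOnNhd.eval_continuousLinearMap'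
    (EuclideanSpace.proj · : ι → EuclideanSpace ℝ ι →L[ℝ] ℝ) q

theorem polynomialFunction_eq_zero_of_ae_restrict {q : MvPolynomial ι ℝ}
    {s : Set (EuclideanSpace ℝ ι)} (hs : (interior s).Nonempty)
    (hq : polynomialFunction q =ᵐ[volume.restrict s] 0) : polynomialFunction q = 0 := by
  obtain ⟨x, hx⟩ := hs
  have hint : Set.EqOn (polynomialFunction q) 0 (interior s) :=
    Measure.eqOn_open_of_ae_eq (ae_restrict_of_ae_restrict_of_subset interior_subset hq)
      isOpen_interior (polynomialFunction q).continuous.continuousOn continuousOn_const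
  have hnhds : polynomialFunction q =ᶠ[nhds x] 0 :=
    hint.eventuallyEq_of_mem (isOpen_interior.mem_nhds hx)
  exact DFunLike.coe_injective <|
    (analyticOnNhd_polynomialFunction q).eq_of_eventuallyEq analyticOnNhd_const hnhds

theorem exists_abs_polynomialFunction_le_mul_lpNorm (p : ℝ≥0∞) [Fact (1 ≤ p)] (n : ℕ)
    {s B : Set (EuclideanSpace ℝ ι)} (hs : Bornology.IsBounded s) (hint : (interior s).Nonempty)
    (hB : IsCompact B) :
    ∃ C > 0, ∀ q : MvPolynomial ι ℝ, q.totalDegree ≤ n → ∀ x ∈ B,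
      |polynomialFunction q x| ≤ C * lpNorm (polynomialFunction q) p (volume.restrict s) := by
  let V := (MvPolynomial.restrictTotalDegree ι ℝ n).map polynomialFunction
  have hdef : ∀ f ∈ V, f =ᵐ[volume.restrict s] 0 → f = 0 := by
    rintro _ ⟨q, -, rfl⟩ hq
    exact polynomialFunction_eq_zero_of_ae_restrict hint hq
  obtain ⟨C, hC, hbound⟩ := exists_norm_apply_le_mul_lpNorm (p := p) V
    (fun f _ ↦ memLp_restrict_of_isBounded hs f.continuous) hdef hB
  exact ⟨C, hC, fun q hq ↦ hbound _ <|
    Submodule.mem_map_of_mem ((MvPolynomial.mem_restrictTotalDegree _ _ _).2 hq)⟩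

/-- For `p = ∞` the exponent `card ι / p.toReal` is `card ι / 0 = 0`, as sup norms do not scale. -/
theorem stmt3_general (p : ℝ≥0∞) [Fact (1 ≤ p)] (n : ℕ) {ρ : ℝ} (hρ : 0 < ρ) :
    ∃ C > 0, ∀ (x0 : EuclideanSpace ℝ ι) (h : ℝ), 0 < h → ∀ K : Set (EuclideanSpace ℝ ι),
      closedBall x0 (ρ * h) ⊆ K → K ⊆ closedBall x0 h →
        ∀ q : MvPolynomial ι ℝ, q.totalDegree ≤ n → ∀ x ∈ K,
          |polynomialFunction q x| ≤ C * h ^ (-(Fintype.card ι / p.toReal)) *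
            lpNorm (polynomialFunction q) p (volume.restrict K) := by
  have hball : (interior (closedBall (0 : EuclideanSpace ℝ ι) ρ)).Nonempty :=
    ⟨0, ball_subset_interior_closedBall (mem_ball_self hρ)⟩
  obtain ⟨C, hC, href⟩ := exists_abs_polynomialFunction_le_mul_lpNorm p n isBounded_closedBall
    hball (isCompact_closedBall 0 1)
  refine ⟨C, hC, fun x0 h hh K hinner houter q hq x hx ↦ ?_⟩
  obtain ⟨q', hdeg, heval⟩ := exists_totalDegree_le_eval_add_smul x0.ofLp h q
  have hpull (y : EuclideanSpace ℝ ι) :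
      polynomialFunction q' y = polynomialFunction q (x0 + h • y) := heval y.ofLp
  obtain ⟨z, hz, rfl⟩ : ∃ z ∈ closedBall 0 1, x0 + h • z = x := by
    refine ⟨h⁻¹ • (x - x0), ?_, by rw [smul_inv_smul₀ hh.ne', add_sub_cancel]⟩
    rw [← preimage_add_smul_closedBall x0 hh]
    simpa [smul_inv_smul₀ hh.ne'] using houter hx
  calc |polynomialFunction q (x0 + h • z)|
    _ ≤ C * lpNorm (polynomialFunction q') p (volume.restrict (closedBall 0 ρ)) :=
      hpull z ▸ href q' (hdeg.trans hq) z hz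
    _ = C * (h ^ (-(Fintype.card ι / p.toReal)) *
          lpNorm (polynomialFunction q) p (volume.restrict (closedBall x0 (ρ * h)))) := by
      rw [funext hpull, ← preimage_add_smul_closedBall x0 hh, lpNorm_comp_add_smul _ _ _ _ hh,
        finrank_euclideanSpace]
    _ ≤ C * (h ^ (-(Fintype.card ι / p.toReal)) *
          lpNorm (polynomialFunction q) p (volume.restrict K)) := by
      gcongr
      exact lpNorm_mono_measure
        (memLp_restrict_of_isBounded (isBounded_closedBall.subset houter)
          (polynomialFunction q).continuous)
        (Measure.restrict_mono_set _ hinner)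
    _ = _ := (mul_assoc _ _ _).symm

end Polynomial

/-- `L^∞`–`L²` polynomial inverse inequality on a shape-regular planar element:
if `closedBall x0 (ρ*h) ⊆ K ⊆ closedBall x0 h` and `p` is a polynomial function of total
degree at most `n`, then `sup_K |p| ≤ C h⁻¹ ‖p‖_{L²(K)}` with `C` depending only on `n`
and `ρ`. -/
theorem stmt3 (n : ℕ) (ρ : ℝ) (hρ0 : 0 < ρ) (hρ1 : ρ ≤ 1) :
    ∃ C > (0 : ℝ),
      ∀ (x0 : EuclideanSpace ℝ (Fin 2)) (h : ℝ), 0 < h →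
        ∀ K : Set (EuclideanSpace ℝ (Fin 2)), MeasurableSet K →
          closedBall x0 (ρ * h) ⊆ K → K ⊆ closedBall x0 h →
            ∀ q : MvPolynomial (Fin 2) ℝ, q.totalDegree ≤ n →
              ∀ x ∈ K,
                |MvPolynomial.eval (fun i => x i) q| ≤
                  C * h⁻¹ *
                    Real.sqrt (∫ y in K, (MvPolynomial.eval (fun i => y i) q) ^ 2 ∂volume) := by
  obtain ⟨C, hC, H⟩ := stmt3_general (ι := Fin 2) 2 n hρ0
  refine ⟨C, hC, fun x0 h hh K _ hinner houter q hq x hx ↦ ?_⟩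
  simpa [lpNorm_two_eq_sqrt_integral_sq (polynomialFunction q).continuous.aestronglyMeasurable,
    polynomialFunction_apply, Real.rpow_neg_one] using H x0 h hh K hinner houter q hq x hx
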